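/- arXiv:math/9806068 — 2 statements merged into one kernel-verified Lean document; each statement's English description precedes it below -/
import Mathlib

section
/- The elliptic dynamical R-matrix satisfies the dynamical Yang–Baxter equation: for all z₁, z₂, z₃ ∈ ℂ and λ ∈ ℂ^N (at parameter values where every theta factor in a denominator is nonzero), R^{(12)}(z₁-z₂, λ-γh^{(3)}) R^{(13)}(z₁-z₃, λ) R^{(23)}(z₂-z₃, λ-γh^{(1)}) = R^{(23)}(z₂-z₃, λ) R^{(13)}(z₁-z₃, λ-γh^{(2)}) R^{(12)}(z₁-z₂, λ) as operators on ℂ^N ⊗ ℂ^N ⊗ ℂ^N. -/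
/-!
The entries of both sides are compared after applying them to a vector `v`: a row of `R` has at
most two nonzero entries, so each side evaluated at `(i, j, k)` is an explicit sum of eight terms
(`R12_mulVec` and its companions), and the equation splits into one scalar identity between
products of `α` and `β` for each rearrangement of `(i, j, k)`. The row may have
all three indices equal (trivial), exactly two equal in one of three ways, or all distinct.

After clearing denominators each scalar identity is a consequence of one or two instances of
Weierstrass's three-term relation for `θ` (`weierstrass`, `three_term`), together with the oddness
of `θ` (`theta_neg`). The three-term relation itself comes from the addition formula
`theta_mul_theta`: sorting the double series of `θ(x + y)θ(x - y)` by parity gives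
`E(x)O(y) - O(x)E(y)`, where `E` and `O` are the sums of `exp(πi m²τ/2 + 2πi m x)` over even and
odd `m`. The relation is then the Plücker identity for `2 × 2` minors.
-/

noncomputable section

open Complex BigOperators

namespace Ruijsenaars

/-- Jacobi's first theta function
`θ(z) = -∑_{j∈ℤ} exp(πi(j+1/2)²τ + 2πi(j+1/2)(z+1/2))`. -/
def theta (τ z : ℂ) : ℂ :=
  - ∑' j : ℤ, Complex.exp (Real.pi * Complex.I * ((j : ℂ) + 1 / 2) ^ 2 * τ +
      2 * Real.pi * Complex.I * ((j : ℂ) + 1 / 2) * (z + 1 / 2))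

/-- `α(z,w) = θ(z)θ(w+γ)/(θ(z-γ)θ(w))`. -/
def alpha (τ γ z w : ℂ) : ℂ :=
  theta τ z * theta τ (w + γ) / (theta τ (z - γ) * theta τ w)

/-- `β(z,w) = -θ(z+w)θ(γ)/(θ(z-γ)θ(w))`. -/
def beta (τ γ z w : ℂ) : ℂ :=
  - (theta τ (z + w) * theta τ γ / (theta τ (z - γ) * theta τ w))

/-- The elliptic dynamical R-matrix `R(z,λ)` on `ℂ^N ⊗ ℂ^N`,
`R(z,λ) = ∑_i e_{ii}⊗e_{ii} + ∑_{i≠j} α(z,λ_i-λ_j) e_{ii}⊗e_{jj}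
        + ∑_{i≠j} β(z,λ_i-λ_j) e_{ij}⊗e_{ji}`,
written as a matrix on the standard basis of `ℂ^N ⊗ ℂ^N`: the entry at row `(i,j)`,
column `(k,l)` is the coefficient `R_{ik,jl}(z,λ)` of `e_{ik} ⊗ e_{jl}`. -/
def Rm (τ γ : ℂ) {N : ℕ} (z : ℂ) (lam : Fin N → ℂ) :
    Matrix (Fin N × Fin N) (Fin N × Fin N) ℂ := fun p q =>
  if p = q then (if p.1 = p.2 then 1 else alpha τ γ z (lam p.1 - lam p.2))
  else if p.1 = q.2 ∧ p.2 = q.1 then beta τ γ z (lam p.1 - lam p.2) else 0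

/-- The shift `λ ↦ λ - γ ω_j` by the `j`-th standard basis vector. -/
def shift1 (γ : ℂ) {N : ℕ} (lam : Fin N → ℂ) (j : Fin N) : Fin N → ℂ :=
  fun i => lam i - if i = j then γ else 0

/-- `R^{(12)}(z, λ-γh^{(3)})` on `ℂ^N ⊗ ℂ^N ⊗ ℂ^N`: acts as `R(z, λ-γω_k)` on the
factors 1,2 of a basis vector carrying `e_k` in the third factor. -/
def R12d (τ γ z : ℂ) {N : ℕ} (lam : Fin N → ℂ) :
    Matrix (Fin N × Fin N × Fin N) (Fin N × Fin N × Fin N) ℂ := fun p q =>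
  if p.2.2 = q.2.2 then Rm τ γ z (shift1 γ lam q.2.2) (p.1, p.2.1) (q.1, q.2.1) else 0

/-- `R^{(12)}(z, λ)` on `ℂ^N ⊗ ℂ^N ⊗ ℂ^N`. -/
def R12 (τ γ z : ℂ) {N : ℕ} (lam : Fin N → ℂ) :
    Matrix (Fin N × Fin N × Fin N) (Fin N × Fin N × Fin N) ℂ := fun p q =>
  if p.2.2 = q.2.2 then Rm τ γ z lam (p.1, p.2.1) (q.1, q.2.1) else 0

/-- `R^{(13)}(z, λ)` on `ℂ^N ⊗ ℂ^N ⊗ ℂ^N`. -/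
def R13 (τ γ z : ℂ) {N : ℕ} (lam : Fin N → ℂ) :
    Matrix (Fin N × Fin N × Fin N) (Fin N × Fin N × Fin N) ℂ := fun p q =>
  if p.2.1 = q.2.1 then Rm τ γ z lam (p.1, p.2.2) (q.1, q.2.2) else 0

/-- `R^{(13)}(z, λ-γh^{(2)})` on `ℂ^N ⊗ ℂ^N ⊗ ℂ^N`. -/
def R13d (τ γ z : ℂ) {N : ℕ} (lam : Fin N → ℂ) :
    Matrix (Fin N × Fin N × Fin N) (Fin N × Fin N × Fin N) ℂ := fun p q =>
  if p.2.1 = q.2.1 then Rm τ γ z (shift1 γ lam q.2.1) (p.1, p.2.2) (q.1, q.2.2) else 0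

/-- `R^{(23)}(z, λ)` on `ℂ^N ⊗ ℂ^N ⊗ ℂ^N`. -/
def R23 (τ γ z : ℂ) {N : ℕ} (lam : Fin N → ℂ) :
    Matrix (Fin N × Fin N × Fin N) (Fin N × Fin N × Fin N) ℂ := fun p q =>
  if p.1 = q.1 then Rm τ γ z lam (p.2.1, p.2.2) (q.2.1, q.2.2) else 0

/-- `R^{(23)}(z, λ-γh^{(1)})` on `ℂ^N ⊗ ℂ^N ⊗ ℂ^N`. -/
def R23d (τ γ z : ℂ) {N : ℕ} (lam : Fin N → ℂ) :
    Matrix (Fin N × Fin N × Fin N) (Fin N × Fin N × Fin N) ℂ := fun p q =>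
  if p.1 = q.1 then Rm τ γ z (shift1 γ lam q.1) (p.2.1, p.2.2) (q.2.1, q.2.2) else 0

/-! ### The three-term relation for the theta function -/

/-- The term of index `j` of the series defining `-θ(z)`. -/
def thetaTerm (τ z : ℂ) (j : ℤ) : ℂ :=
  Complex.exp (Real.pi * Complex.I * ((j : ℂ) + 1 / 2) ^ 2 * τ +
      2 * Real.pi * Complex.I * ((j : ℂ) + 1 / 2) * (z + 1 / 2))

/-- The term `exp(πi m²τ/2 + 2πi m x)` with `m = 2s`. -/
def evenTerm (τ x : ℂ) (s : ℤ) : ℂ :=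
  Complex.exp (2 * Real.pi * Complex.I * (s : ℂ) ^ 2 * τ +
      4 * Real.pi * Complex.I * (s : ℂ) * x)

/-- The term `exp(πi m²τ/2 + 2πi m x)` with `m = 2s + 1`. -/
def oddTerm (τ x : ℂ) (s : ℤ) : ℂ :=
  Complex.exp (2 * Real.pi * Complex.I * ((s : ℂ) + 1 / 2) ^ 2 * τ +
      4 * Real.pi * Complex.I * ((s : ℂ) + 1 / 2) * x)

lemma theta_eq (τ z : ℂ) : theta τ z = -∑' j : ℤ, thetaTerm τ z j := rfl

lemma summable_thetaTerm {τ : ℂ} (hτ : 0 < τ.im) (z : ℂ) : Summable (thetaTerm τ z) := by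
  have h := ((summable_jacobiTheta₂_term_iff (z + 1 / 2 + τ / 2) τ).2 hτ).mul_left
    (Complex.exp (Real.pi * Complex.I * τ / 4 + Real.pi * Complex.I * (z + 1 / 2)))
  refine h.congr fun j => ?_
  rw [thetaTerm, jacobiTheta₂_term, ← Complex.exp_add]
  congr 1
  ring

lemma two_mul_im_pos {τ : ℂ} (hτ : 0 < τ.im) : 0 < (2 * τ).im := by
  simpa using hτ

lemma summable_evenTerm {τ : ℂ} (hτ : 0 < τ.im) (x : ℂ) : Summable (evenTerm τ x) := by
  refine ((summable_jacobiTheta₂_term_iff (2 * x) (2 * τ)).2 (two_mul_im_pos hτ)).congr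
    fun j => ?_
  rw [evenTerm, jacobiTheta₂_term]
  congr 1
  ring

lemma summable_oddTerm {τ : ℂ} (hτ : 0 < τ.im) (x : ℂ) : Summable (oddTerm τ x) := by
  have h := ((summable_jacobiTheta₂_term_iff (2 * x + τ) (2 * τ)).2
    (two_mul_im_pos hτ)).mul_left
    (Complex.exp (Real.pi * Complex.I * τ / 2 + 2 * Real.pi * Complex.I * x))
  refine h.congr fun j => ?_
  rw [oddTerm, jacobiTheta₂_term, ← Complex.exp_add]
  congr 1
  ring

/-- The exponents `(j, k)` of a product of two theta series, sorted by the parity of `j - k`: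
`j + k + 1` and `j - k` are `(2s, 2t + 1)` on the left summand and `(2s + 1, 2t)` on the right. -/
def parityEquiv : (ℤ × ℤ) ⊕ (ℤ × ℤ) ≃ ℤ × ℤ :=
  Equiv.ofBijective
    (Sum.elim (fun p => (p.1 + p.2, p.1 - p.2 - 1)) (fun p => (p.1 + p.2, p.1 - p.2))) (by
    constructor
    · rintro (⟨a, b⟩ | ⟨a, b⟩) (⟨c, d⟩ | ⟨c, d⟩) h <;>
        simp only [Sum.elim_inl, Sum.elim_inr, Prod.mk.injEq] at h
      · simp only [Sum.inl.injEq, Prod.mk.injEq]; omega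
      · omega
      · omega
      · simp only [Sum.inr.injEq, Prod.mk.injEq]; omega
    · rintro ⟨j, k⟩
      rcases Int.even_or_odd (j - k) with ⟨t, ht⟩ | ⟨t, ht⟩
      · refine ⟨Sum.inr (k + t, t), ?_⟩
        simp only [Sum.elim_inr, Prod.mk.injEq]; omega
      · refine ⟨Sum.inl (k + t + 1, t), ?_⟩
        simp only [Sum.elim_inl, Prod.mk.injEq]; omega)

lemma exp_two_pi_int_mul (w : ℂ) (n : ℤ) :
    Complex.exp (w + n * (2 * Real.pi * Complex.I)) = Complex.exp w := by
  rw [Complex.exp_add, Complex.exp_int_mul_two_pi_mul_I, mul_one]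

lemma exp_odd_pi_mul (w : ℂ) (n : ℤ) :
    Complex.exp (w + (Real.pi * Complex.I + n * (2 * Real.pi * Complex.I))) =
      -Complex.exp w := by
  rw [Complex.exp_add, exp_two_pi_int_mul, Complex.exp_pi_mul_I, mul_neg_one]

lemma term_inl (τ x y : ℂ) (s t : ℤ) :
    thetaTerm τ (x + y) (s + t) * thetaTerm τ (x - y) (s - t - 1) =
      evenTerm τ x s * oddTerm τ y t := by
  rw [thetaTerm, thetaTerm, evenTerm, oddTerm, ← Complex.exp_add, ← Complex.exp_add,
    ← exp_two_pi_int_mul _ (-s)]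
  congr 1
  push_cast
  ring

lemma term_inr (τ x y : ℂ) (s t : ℤ) :
    thetaTerm τ (x + y) (s + t) * thetaTerm τ (x - y) (s - t) =
      -(oddTerm τ x s * evenTerm τ y t) := by
  rw [thetaTerm, thetaTerm, evenTerm, oddTerm, ← Complex.exp_add, ← Complex.exp_add,
    ← exp_odd_pi_mul _ s]
  congr 1
  push_cast
  ring

lemma hasSum_mul {f g : ℤ → ℂ} (hf : Summable f) (hg : Summable g) :
    HasSum (fun p : ℤ × ℤ => f p.1 * g p.2) ((∑' s, f s) * ∑' t, g t) := by
  rw [tsum_mul_tsum_of_summable_norm hf.norm hg.norm]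
  exact (summable_mul_of_summable_norm hf.norm hg.norm).hasSum

/-- A product `θ(x + y)θ(x - y)` is a `2 × 2` determinant in functions of `x` and `y` alone. -/
lemma theta_mul_theta {τ : ℂ} (hτ : 0 < τ.im) (x y : ℂ) :
    theta τ (x + y) * theta τ (x - y) =
      (∑' s, evenTerm τ x s) * (∑' t, oddTerm τ y t) -
        (∑' s, oddTerm τ x s) * (∑' t, evenTerm τ y t) := by
  have h := hasSum_mul (summable_thetaTerm hτ (x + y)) (summable_thetaTerm hτ (x - y))
  have hl := hasSum_mul (summable_evenTerm hτ x) (summable_oddTerm hτ y)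
  have hr := (hasSum_mul (summable_oddTerm hτ x) (summable_evenTerm hτ y)).neg
  rw [← parityEquiv.hasSum_iff] at h
  have h' := HasSum.sum (f := (fun p : ℤ × ℤ =>
    thetaTerm τ (x + y) p.1 * thetaTerm τ (x - y) p.2) ∘ parityEquiv)
    (hl.congr_fun fun p => ?_) (hr.congr_fun fun p => ?_)
  · rw [theta_eq, theta_eq, neg_mul_neg, h.unique h', sub_eq_add_neg]
  · exact term_inl τ x y p.1 p.2
  · exact term_inr τ x y p.1 p.2

/-- Weierstrass's three-term relation, in terms of the four arguments of its first product. It is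
the Plücker relation for the determinants of `theta_mul_theta`. -/
lemma weierstrass {τ : ℂ} (hτ : 0 < τ.im) (A B C D : ℂ) :
    theta τ A * theta τ B * theta τ C * theta τ D
      - theta τ ((A + B + C + D) / 2) * theta τ ((A + B - C - D) / 2) *
        theta τ ((A - B + C - D) / 2) * theta τ ((A - B - C + D) / 2)
      + theta τ ((A + B + C - D) / 2) * theta τ ((A + B - C + D) / 2) *
        theta τ ((A - B + C + D) / 2) * theta τ ((A - B - C - D) / 2) = 0 := by
  have e := theta_mul_theta hτ
  have h1 := e ((A + B) / 2) ((A - B) / 2)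
  have h2 := e ((C + D) / 2) ((C - D) / 2)
  have h3 := e ((A + B) / 2) ((C + D) / 2)
  have h4 := e ((A - B) / 2) ((C - D) / 2)
  have h5 := e ((A + B) / 2) ((C - D) / 2)
  have h6 := e ((A - B) / 2) ((C + D) / 2)
  rw [show (A + B) / 2 + (A - B) / 2 = A by ring,
    show (A + B) / 2 - (A - B) / 2 = B by ring] at h1
  rw [show (C + D) / 2 + (C - D) / 2 = C by ring,
    show (C + D) / 2 - (C - D) / 2 = D by ring] at h2
  rw [show (A + B + C + D) / 2 = (A + B) / 2 + (C + D) / 2 by ring,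
    show (A + B - C - D) / 2 = (A + B) / 2 - (C + D) / 2 by ring,
    show (A - B + C - D) / 2 = (A - B) / 2 + (C - D) / 2 by ring,
    show (A - B - C + D) / 2 = (A - B) / 2 - (C - D) / 2 by ring,
    show (A + B + C - D) / 2 = (A + B) / 2 + (C - D) / 2 by ring,
    show (A + B - C + D) / 2 = (A + B) / 2 - (C - D) / 2 by ring,
    show (A - B + C + D) / 2 = (A - B) / 2 + (C + D) / 2 by ring,
    show (A - B - C - D) / 2 = (A - B) / 2 - (C + D) / 2 by ring,
    mul_assoc (theta τ A * theta τ B), h1, h2,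
    mul_assoc (theta τ ((A + B) / 2 + (C + D) / 2) * _), h3, h4,
    mul_assoc (theta τ ((A + B) / 2 + (C - D) / 2) * _), h5, h6]
  ring

lemma theta_neg (τ z : ℂ) : theta τ (-z) = -theta τ z := by
  rw [theta_eq, theta_eq, neg_inj, ← (Equiv.subLeft (-1 : ℤ)).tsum_eq (thetaTerm τ (-z)),
    ← tsum_neg]
  refine tsum_congr fun j => ?_
  rw [thetaTerm, thetaTerm, ← exp_odd_pi_mul _ (-(j + 1))]
  congr 1
  simp only [Equiv.subLeft_apply]
  push_cast
  ring
/-- `weierstrass` with the half-sums named, so that they can be given in simplified form. -/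
lemma three_term {τ : ℂ} (hτ : 0 < τ.im) (A B C D P Q R S P' Q' R' S' : ℂ)
    (hP : A + B + C + D = 2 * P) (hQ : A + B - C - D = 2 * Q)
    (hR : A - B + C - D = 2 * R) (hS : A - B - C + D = 2 * S)
    (hP' : A + B + C - D = 2 * P') (hQ' : A + B - C + D = 2 * Q')
    (hR' : A - B + C + D = 2 * R') (hS' : A - B - C - D = 2 * S') :
    theta τ A * theta τ B * theta τ C * theta τ D
      - theta τ P * theta τ Q * theta τ R * theta τ S
      + theta τ P' * theta τ Q' * theta τ R' * theta τ S' = 0 := by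
  have h := weierstrass hτ A B C D
  have two : (2 : ℂ) ≠ 0 := two_ne_zero
  rwa [hP, hQ, hR, hS, hP', hQ', hR', hS', mul_div_cancel_left₀ _ two,
    mul_div_cancel_left₀ _ two, mul_div_cancel_left₀ _ two, mul_div_cancel_left₀ _ two,
    mul_div_cancel_left₀ _ two, mul_div_cancel_left₀ _ two, mul_div_cancel_left₀ _ two,
    mul_div_cancel_left₀ _ two] at h

/-! ### Scalar identities between `α` and `β` -/

lemma alpha_neg (τ γ z x : ℂ) : alpha τ γ z (-x) =
    theta τ z * theta τ (x - γ) / (theta τ (z - γ) * theta τ x) := by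
  rw [alpha, show -x + γ = -(x - γ) by ring, theta_neg, theta_neg, mul_neg, mul_neg, neg_div_neg_eq]

lemma beta_neg (τ γ z x : ℂ) : beta τ γ z (-x) =
    theta τ (z - x) * theta τ γ / (theta τ (z - γ) * theta τ x) := by
  rw [beta, ← sub_eq_add_neg, theta_neg, mul_neg, div_neg, neg_neg]

lemma alpha_pred (τ γ z x : ℂ) : alpha τ γ z (x - γ) =
    theta τ z * theta τ x / (theta τ (z - γ) * theta τ (x - γ)) := by
  rw [alpha, sub_add_cancel]

lemma beta_pred (τ γ z x : ℂ) : beta τ γ z (x - γ) =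
    -(theta τ (z + x - γ) * theta τ γ / (theta τ (z - γ) * theta τ (x - γ))) := by
  rw [beta, add_sub_assoc]

lemma alpha_succ (τ γ z x : ℂ) : alpha τ γ z (γ - x) =
    theta τ z * theta τ (x - 2 * γ) / (theta τ (z - γ) * theta τ (x - γ)) := by
  rw [alpha, show γ - x + γ = -(x - 2 * γ) by ring, show γ - x = -(x - γ) by ring, theta_neg,
    theta_neg, mul_neg, mul_neg, neg_div_neg_eq]

lemma beta_succ (τ γ z x : ℂ) : beta τ γ z (γ - x) =
    theta τ (z - x + γ) * theta τ γ / (theta τ (z - γ) * theta τ (x - γ)) := by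
  rw [beta, show z + (γ - x) = z - x + γ by ring, show γ - x = -(x - γ) by ring, theta_neg,
    mul_neg, div_neg, neg_neg]

/-! In the names below, the first triple is the row and the second the column of the matrix entry in
which the identity occurs; `z = z₁ - z₂` and `w = z₂ - z₃`. For distinct indices `i, j, k` the
row is `(i, j, k)`, `x = λ_i - λ_j` and `y = λ_j - λ_k`. -/

lemma distinct_kij {τ γ z w x y : ℂ} (hτ : 0 < τ.im) (hz : theta τ (z - γ) ≠ 0)
    (hzw : theta τ (z + w - γ) ≠ 0) (hw : theta τ (w - γ) ≠ 0) (hx : theta τ x ≠ 0)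
    (hy : theta τ y ≠ 0) (hxy : theta τ (x + y) ≠ 0) :
    beta τ γ z x * beta τ γ (z + w) y * alpha τ γ w x +
      alpha τ γ z x * beta τ γ (z + w) (x + y) * beta τ γ w (-x) =
      beta τ γ w y * alpha τ γ (z + w) x * beta τ γ z (x + y) := by
  have h1 := three_term hτ (z + x) w (z + w + y) (x + y) (z + w + (x + y)) (-y) z (-(w - x)) (z + w)
      x (z + (x + y)) (-(w + y))
    (by ring) (by ring) (by ring) (by ring) (by ring) (by ring) (by ring) (by ring)
  simp only [theta_neg] at h1
  simp only [beta_neg]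
  simp only [alpha, beta]
  field_simp
  linear_combination theta τ γ ^ 2 * theta τ (x + γ) * h1

lemma distinct_jki {τ γ z w x y : ℂ} (hτ : 0 < τ.im) (hz : theta τ (z - γ) ≠ 0)
    (hzw : theta τ (z + w - γ) ≠ 0) (hw : theta τ (w - γ) ≠ 0) (hx : theta τ x ≠ 0)
    (hy : theta τ y ≠ 0) (hxy : theta τ (x + y) ≠ 0) :
    beta τ γ z x * alpha τ γ (z + w) y * beta τ γ w (x + y) =
      alpha τ γ w y * beta τ γ (z + w) (x + y) * beta τ γ z (-y) +
        beta τ γ w y * beta τ γ (z + w) x * alpha τ γ z y := by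
  have h1 := three_term hτ (z + w) (z + x) (w + (x + y)) y (z + w + (x + y)) (z - y) w (-x)
      (z + w + x) z (w + y) (-(x + y))
    (by ring) (by ring) (by ring) (by ring) (by ring) (by ring) (by ring) (by ring)
  simp only [theta_neg] at h1
  simp only [beta_neg]
  simp only [alpha, beta]
  field_simp
  linear_combination theta τ γ ^ 2 * theta τ (y + γ) * h1

lemma distinct_kji {τ γ z w x y : ℂ} (hτ : 0 < τ.im) (hz : theta τ (z - γ) ≠ 0)
    (hzw : theta τ (z + w - γ) ≠ 0) (hw : theta τ (w - γ) ≠ 0) (hx : theta τ x ≠ 0)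
    (hy : theta τ y ≠ 0) (hxy : theta τ (x + y) ≠ 0) :
    alpha τ γ z x * alpha τ γ w (-x) * beta τ γ (z + w) (x + y) +
      beta τ γ z x * beta τ γ w x * beta τ γ (z + w) y =
      alpha τ γ w y * alpha τ γ z (-y) * beta τ γ (z + w) (x + y) +
        beta τ γ w y * beta τ γ z y * beta τ γ (z + w) x := by
  have h1 := three_term hτ (x + γ) (x - γ) y y (x + y) (x - y) γ γ x x (y + γ) (-(y - γ))
    (by ring) (by ring) (by ring) (by ring) (by ring) (by ring) (by ring) (by ring)
  have h2 := three_term hτ z w (z + w + (x + y)) (x - y) (z + w + x) (-x) (z + y) (-(w + y))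
      (z + w + y) (-y) (z + x) (-(w + x))
    (by ring) (by ring) (by ring) (by ring) (by ring) (by ring) (by ring) (by ring)
  simp only [theta_neg] at h1 h2
  simp only [alpha_neg]
  simp only [alpha, beta]
  field_simp
  linear_combination -(theta τ γ * theta τ z * theta τ w * theta τ (z + w + (x + y))) * h1 -
    theta τ γ ^ 3 * theta τ (x + y) * h2

/-! With only two distinct indices `i, k` occurring, `x = λ_i - λ_k`. -/

lemma iik_iki {τ γ z w x : ℂ} (hτ : 0 < τ.im) (hz : theta τ (z - γ) ≠ 0)
    (hzw : theta τ (z + w - γ) ≠ 0) (hw : theta τ (w - γ) ≠ 0) (hx : theta τ x ≠ 0)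
    (hxg : theta τ (x - γ) ≠ 0) :
    alpha τ γ (z + w) x * beta τ γ w (x - γ) =
      alpha τ γ w x * beta τ γ (z + w) (x - γ) * beta τ γ z (-x) + beta τ γ w x * alpha τ γ z x := by
  have h1 := three_term hτ (z + w) (w + x - γ) (z - γ) x (z + w + x - γ) w (z - x) γ (z + w - γ)
      (w + x) z (-(x - γ))
    (by ring) (by ring) (by ring) (by ring) (by ring) (by ring) (by ring) (by ring)
  simp only [theta_neg] at h1
  simp only [beta_neg, beta_pred]
  simp only [alpha, beta]
  field_simp
  linear_combination -(theta τ γ * theta τ (x + γ)) * h1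

lemma iik_kii {τ γ z w x : ℂ} (hτ : 0 < τ.im) (hz : theta τ (z - γ) ≠ 0)
    (hzw : theta τ (z + w - γ) ≠ 0) (hw : theta τ (w - γ) ≠ 0) (hx : theta τ x ≠ 0)
    (hxg : theta τ (x - γ) ≠ 0) :
    beta τ γ (z + w) x =
      alpha τ γ w x * beta τ γ (z + w) (x - γ) * alpha τ γ z (-x) + beta τ γ w x * beta τ γ z x := by
  have h1 := three_term hτ z w (z + w + x - γ) (x + γ) (z + w + x) (-x) (z - γ) (-(w - γ))
      (z + w - γ) γ (z + x) (-(w + x))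
    (by ring) (by ring) (by ring) (by ring) (by ring) (by ring) (by ring) (by ring)
  simp only [theta_neg] at h1
  simp only [alpha_neg, beta_pred]
  simp only [alpha, beta]
  field_simp
  linear_combination theta τ γ * h1

lemma iki_iki {τ γ z w x : ℂ} (hτ : 0 < τ.im) (hz : theta τ (z - γ) ≠ 0)
    (hzw : theta τ (z + w - γ) ≠ 0) (hw : theta τ (w - γ) ≠ 0) (hx : theta τ x ≠ 0)
    (hxg : theta τ (x - γ) ≠ 0) :
    alpha τ γ z (x - γ) * alpha τ γ w (γ - x) +
      beta τ γ z (x - γ) * beta τ γ (z + w) (-x) * beta τ γ w (x - γ) =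
      alpha τ γ w (-x) * alpha τ γ z x +
        beta τ γ w (-x) * beta τ γ (z + w) (x - γ) * beta τ γ z (-x) := by
  have h1 := three_term hτ x x x (x - 2 * γ) (2 * x - γ) γ γ (-γ) (x + γ) (x - γ) (x - γ) (-(x - γ))
    (by ring) (by ring) (by ring) (by ring) (by ring) (by ring) (by ring) (by ring)
  have h2 := three_term hτ (z + x - γ) (w + x - γ) (z + w - x) x (z + w + x - γ) (x - γ) (z - x)
      (-(w - x)) (z + w - γ) (2 * x - γ) z (-w)
    (by ring) (by ring) (by ring) (by ring) (by ring) (by ring) (by ring) (by ring)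
  simp only [theta_neg] at h1 h2
  simp only [alpha_neg, alpha_pred, alpha_succ, beta_neg, beta_pred]
  simp only [alpha]
  field_simp
  rw [mul_comm γ 2]
  linear_combination theta τ z * theta τ w * theta τ (z + w - γ) * h1 + theta τ γ ^ 3 * h2

lemma iki_iik {τ γ z w x : ℂ} (hτ : 0 < τ.im) (hz : theta τ (z - γ) ≠ 0)
    (hzw : theta τ (z + w - γ) ≠ 0) (hw : theta τ (w - γ) ≠ 0) (hx : theta τ x ≠ 0)
    (hxg : theta τ (x - γ) ≠ 0) :
    alpha τ γ z (x - γ) * beta τ γ w (γ - x) +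
      beta τ γ z (x - γ) * beta τ γ (z + w) (-x) * alpha τ γ w (x - γ) =
      beta τ γ w (-x) * alpha τ γ (z + w) (x - γ) := by
  have h1 := three_term hτ z x (w - x + γ) (z + w - γ) (z + w) (-(w - x)) (-(x - γ)) (z - γ) γ
      (z + x - γ) (z + w - x) (-w)
    (by ring) (by ring) (by ring) (by ring) (by ring) (by ring) (by ring) (by ring)
  simp only [theta_neg] at h1
  simp only [alpha_pred, beta_neg, beta_pred, beta_succ]
  field_simp
  linear_combination theta τ γ * h1

lemma iki_kii {τ γ z w x : ℂ} (hτ : 0 < τ.im) (hz : theta τ (z - γ) ≠ 0)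
    (hzw : theta τ (z + w - γ) ≠ 0) (hw : theta τ (w - γ) ≠ 0) (hx : theta τ x ≠ 0)
    (hxg : theta τ (x - γ) ≠ 0) :
    beta τ γ z (x - γ) * alpha τ γ (z + w) (-x) =
      alpha τ γ w (-x) * beta τ γ z x +
        beta τ γ w (-x) * beta τ γ (z + w) (x - γ) * alpha τ γ z (-x) := by
  have h1 := three_term hτ (z + w) (z + x - γ) (w - γ) x (z + w + x - γ) z (w - x) γ (z + w - γ)
      (z + x) w (-(x - γ))
    (by ring) (by ring) (by ring) (by ring) (by ring) (by ring) (by ring) (by ring)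
  simp only [theta_neg] at h1
  simp only [alpha_neg, beta_neg, beta_pred]
  simp only [beta]
  field_simp
  linear_combination -theta τ γ * h1

lemma kii_iik {τ γ z w x : ℂ} (hτ : 0 < τ.im) (hz : theta τ (z - γ) ≠ 0)
    (hzw : theta τ (z + w - γ) ≠ 0) (hw : theta τ (w - γ) ≠ 0) (hx : theta τ x ≠ 0)
    (hxg : theta τ (x - γ) ≠ 0) :
    alpha τ γ z (γ - x) * beta τ γ (z + w) (-x) * alpha τ γ w (x - γ) +
      beta τ γ z (γ - x) * beta τ γ w (γ - x) =
      beta τ γ (z + w) (γ - x) := by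
  have h1 := three_term hτ z w (z + w - x) (x - 2 * γ) (z + w - γ) γ (z - x + γ) (-(w - x + γ))
      (z + w - x + γ) (x - γ) (z - γ) (-(w - γ))
    (by ring) (by ring) (by ring) (by ring) (by ring) (by ring) (by ring) (by ring)
  simp only [theta_neg] at h1
  simp only [alpha_pred, alpha_succ, beta_neg, beta_succ]
  field_simp
  linear_combination theta τ γ * h1

lemma kii_iki {τ γ z w x : ℂ} (hτ : 0 < τ.im) (hz : theta τ (z - γ) ≠ 0)
    (hzw : theta τ (z + w - γ) ≠ 0) (hw : theta τ (w - γ) ≠ 0) (hx : theta τ x ≠ 0)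
    (hxg : theta τ (x - γ) ≠ 0) :
    alpha τ γ z (γ - x) * beta τ γ (z + w) (-x) * beta τ γ w (x - γ) +
      beta τ γ z (γ - x) * alpha τ γ w (γ - x) =
      alpha τ γ (z + w) (γ - x) * beta τ γ z (-x) := by
  have h1 := three_term hτ w x (z - x + γ) (z + w - γ) (z + w) (-(z - x)) (-(x - γ)) (w - γ) γ
      (w + x - γ) (z + w - x) (-z)
    (by ring) (by ring) (by ring) (by ring) (by ring) (by ring) (by ring) (by ring)
  simp only [theta_neg] at h1
  simp only [alpha_succ, beta_neg, beta_pred, beta_succ]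
  field_simp
  linear_combination theta τ γ * theta τ (x - 2 * γ) * h1

lemma iik_iik (τ γ z w x : ℂ) : alpha τ γ (z + w) x * alpha τ γ w (x - γ) =
    alpha τ γ w x * alpha τ γ (z + w) (x - γ) := by
  simp only [alpha_pred]
  simp only [alpha]
  ring

lemma kii_kii (τ γ z w x : ℂ) : alpha τ γ z (γ - x) * alpha τ γ (z + w) (-x) =
    alpha τ γ (z + w) (γ - x) * alpha τ γ z (-x) := by
  simp only [alpha_neg, alpha_succ]
  ring

/-- `α(z,x)` is a function of `z` times a function of `x`. -/
lemma alpha_mul_alpha (τ γ z z' x x' : ℂ) : alpha τ γ z x * alpha τ γ z' x' =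
    alpha τ γ z' x * alpha τ γ z x' := by
  simp only [alpha]
  ring

/-! ### The action of `R` on the tensor factors -/

/-- The coefficient of `e_i ⊗ e_j` in `R(z,λ)(e_i ⊗ e_j)`. -/
def diagCoeff (τ γ z : ℂ) {N : ℕ} (lam : Fin N → ℂ) (i j : Fin N) : ℂ :=
  if i = j then 1 else alpha τ γ z (lam i - lam j)

/-- The coefficient of `e_i ⊗ e_j` in `R(z,λ)(e_j ⊗ e_i)`, taken to be zero when `i = j` since
`diagCoeff` already accounts for that entry. -/
def swapCoeff (τ γ z : ℂ) {N : ℕ} (lam : Fin N → ℂ) (i j : Fin N) : ℂ :=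
  if i = j then 0 else beta τ γ z (lam i - lam j)

lemma Rm_apply (τ γ z : ℂ) {N : ℕ} (lam : Fin N → ℂ) (i j k l : Fin N) :
    Rm τ γ z lam (i, j) (k, l) =
      (if k = i then if l = j then diagCoeff τ γ z lam i j else 0 else 0) +
        (if k = j then if l = i then swapCoeff τ γ z lam i j else 0 else 0) := by
  unfold Rm diagCoeff swapCoeff
  simp only [Prod.mk.injEq]
  grind

section Action

variable {τ γ z : ℂ} {N : ℕ} (lam : Fin N → ℂ) (v : Fin N × Fin N × Fin N → ℂ) (i j k : Fin N)

lemma R12_mulVec : (R12 τ γ z lam).mulVec v (i, j, k) =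
    diagCoeff τ γ z lam i j * v (i, j, k) + swapCoeff τ γ z lam i j * v (j, i, k) := by
  simp [Matrix.mulVec, dotProduct, R12, Fintype.sum_prod_type, Rm_apply, add_mul,
    Finset.sum_add_distrib, ite_mul]

lemma R12d_mulVec : (R12d τ γ z lam).mulVec v (i, j, k) =
    diagCoeff τ γ z (shift1 γ lam k) i j * v (i, j, k) +
      swapCoeff τ γ z (shift1 γ lam k) i j * v (j, i, k) := by
  simp [Matrix.mulVec, dotProduct, R12d, Fintype.sum_prod_type, Rm_apply, add_mul,
    Finset.sum_add_distrib, ite_mul]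

lemma R13_mulVec : (R13 τ γ z lam).mulVec v (i, j, k) =
    diagCoeff τ γ z lam i k * v (i, j, k) + swapCoeff τ γ z lam i k * v (k, j, i) := by
  simp [Matrix.mulVec, dotProduct, R13, Fintype.sum_prod_type, Rm_apply, add_mul,
    Finset.sum_add_distrib, ite_mul]

lemma R13d_mulVec : (R13d τ γ z lam).mulVec v (i, j, k) =
    diagCoeff τ γ z (shift1 γ lam j) i k * v (i, j, k) +
      swapCoeff τ γ z (shift1 γ lam j) i k * v (k, j, i) := by
  simp [Matrix.mulVec, dotProduct, R13d, Fintype.sum_prod_type, Rm_apply, add_mul,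
    Finset.sum_add_distrib, ite_mul]

lemma R23_mulVec : (R23 τ γ z lam).mulVec v (i, j, k) =
    diagCoeff τ γ z lam j k * v (i, j, k) + swapCoeff τ γ z lam j k * v (i, k, j) := by
  simp [Matrix.mulVec, dotProduct, R23, Fintype.sum_prod_type, Rm_apply, add_mul,
    Finset.sum_add_distrib, ite_mul]

lemma R23d_mulVec : (R23d τ γ z lam).mulVec v (i, j, k) =
    diagCoeff τ γ z (shift1 γ lam i) j k * v (i, j, k) +
      swapCoeff τ γ z (shift1 γ lam i) j k * v (i, k, j) := by
  simp [Matrix.mulVec, dotProduct, R23d, Fintype.sum_prod_type, Rm_apply, add_mul,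
    Finset.sum_add_distrib, ite_mul]

end Action

/-! ### The dynamical Yang–Baxter equation -/

/-- the elliptic dynamical R-matrix satisfies the dynamical
Yang–Baxter equation
`R^{(12)}(z₁-z₂, λ-γh^{(3)}) R^{(13)}(z₁-z₃, λ) R^{(23)}(z₂-z₃, λ-γh^{(1)})
 = R^{(23)}(z₂-z₃, λ) R^{(13)}(z₁-z₃, λ-γh^{(2)}) R^{(12)}(z₁-z₂, λ)`
on `ℂ^N ⊗ ℂ^N ⊗ ℂ^N`, `N = M+2 ≥ 2`, at parameter values where every theta factor
in a denominator is nonzero. -/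
theorem statement0 (τ γ : ℂ) (hτ : 0 < τ.im) (M : ℕ) (z₁ z₂ z₃ : ℂ)
    (lam : Fin (M + 2) → ℂ)
    (hz : theta τ (z₁ - z₂ - γ) ≠ 0 ∧ theta τ (z₁ - z₃ - γ) ≠ 0 ∧
      theta τ (z₂ - z₃ - γ) ≠ 0)
    (hlam : ∀ c : ℤ, |c| ≤ 1 →
      ∀ a b : Fin (M + 2), a ≠ b → theta τ (lam a - lam b + c * γ) ≠ 0) :
    R12d τ γ (z₁ - z₂) lam * R13 τ γ (z₁ - z₃) lam * R23d τ γ (z₂ - z₃) lam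
      = R23 τ γ (z₂ - z₃) lam * R13d τ γ (z₁ - z₃) lam * R12 τ γ (z₁ - z₂) lam := by
  obtain ⟨h12, h13, h23⟩ := hz
  have hadd : z₁ - z₃ = (z₁ - z₂) + (z₂ - z₃) := by ring
  rw [hadd] at h13 ⊢
  generalize z₁ - z₂ = z at h12 h13 ⊢
  generalize z₂ - z₃ = w at h23 h13 ⊢
  have h0 : ∀ a b, a ≠ b → theta τ (lam a - lam b) ≠ 0 := fun a b hab => by
    simpa using hlam 0 (by simp) a b hab
  have hm : ∀ a b, a ≠ b → theta τ (lam a - lam b - γ) ≠ 0 := fun a b hab => by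
    simpa [sub_eq_add_neg] using hlam (-1) (by simp) a b hab
  -- Up to sign, the shifts turn a difference `x` of dynamical variables only into `x` or `x - γ`,
  -- once the order of the two indices is chosen suitably.
  have eneg : ∀ a b, lam b - lam a = -(lam a - lam b) := fun a b => by ring
  have epred : ∀ a b, lam a - γ - lam b = lam a - lam b - γ := fun a b => by ring
  have esucc : ∀ a b, lam b - (lam a - γ) = γ - (lam a - lam b) := fun a b => by ring
  refine Matrix.mulVec_injective (funext fun v => funext fun p => ?_)
  obtain ⟨i, j, k⟩ := p
  simp only [← Matrix.mulVec_mulVec, R12_mulVec, R12d_mulVec, R13_mulVec, R13d_mulVec,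
    R23_mulVec, R23d_mulVec, diagCoeff, swapCoeff, shift1]
  by_cases hij : i = j
  · subst hij
    by_cases hik : i = k
    · subst hik
      simp
    · have hki : ¬ k = i := Ne.symm hik
      simp only [hik, hki, if_true, if_false, sub_zero]
      rw [eneg i k, epred i k]
      have hx := h0 i k hik
      have hxg := hm i k hik
      generalize lam i - lam k = x at hx hxg ⊢
      have h1 := iik_iik τ γ z w x
      have h2 := iik_iki hτ h12 h13 h23 hx hxg
      have h3 := iik_kii hτ h12 h13 h23 hx hxg
      linear_combination v (i, i, k) * h1 + v (i, k, i) * h2 + v (k, i, i) * h3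
  · have hji : ¬ j = i := Ne.symm hij
    by_cases hik : i = k
    · subst hik
      simp only [hij, hji, if_true, if_false, sub_zero]
      rw [eneg i j, epred i j, esucc i j]
      have hx := h0 i j hij
      have hxg := hm i j hij
      generalize lam i - lam j = x at hx hxg ⊢
      have h1 := iki_iik hτ h12 h13 h23 hx hxg
      have h2 := iki_iki hτ h12 h13 h23 hx hxg
      have h3 := iki_kii hτ h12 h13 h23 hx hxg
      linear_combination v (i, i, j) * h1 + v (i, j, i) * h2 + v (j, i, i) * h3
    · have hki : ¬ k = i := Ne.symm hik
      by_cases hjk : j = k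
      · subst hjk
        simp only [hij, hji, if_true, if_false, sub_zero]
        rw [eneg j i, epred j i, esucc j i]
        have hx := h0 j i hji
        have hxg := hm j i hji
        generalize lam j - lam i = x at hx hxg ⊢
        have h1 := kii_iik hτ h12 h13 h23 hx hxg
        have h2 := kii_iki hτ h12 h13 h23 hx hxg
        have h3 := kii_kii τ γ z w x
        linear_combination v (j, j, i) * h1 + v (j, i, j) * h2 + v (i, j, j) * h3
      · have hkj : ¬ k = j := Ne.symm hjk
        simp only [hij, hji, hik, hki, hjk, hkj, if_false, sub_zero]
        have hx := h0 i j hij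
        have hy := h0 j k hjk
        have hxy := h0 i k hik
        rw [eneg i j, eneg j k, ← sub_add_sub_cancel (lam i) (lam j) (lam k)]
        rw [← sub_add_sub_cancel (lam i) (lam j) (lam k)] at hxy
        generalize lam i - lam j = x at hx hxy ⊢
        generalize lam j - lam k = y at hy hxy ⊢
        have h1 := alpha_mul_alpha τ γ z (z + w) x (x + y)
        have h1' := alpha_mul_alpha τ γ (z + w) w y (x + y)
        have h2 := distinct_kij hτ h12 h13 h23 hx hy hxy
        have h3 := distinct_jki hτ h12 h13 h23 hx hy hxy
        have h4 := distinct_kji hτ h12 h13 h23 hx hy hxy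
        linear_combination beta τ γ w y * v (i, k, j) * h1 + beta τ γ z x * v (j, i, k) * h1' +
          v (k, i, j) * h2 + v (j, k, i) * h3 + v (k, j, i) * h4
end Ruijsenaars
end
end

section
/- The action of the Lax operator on the reference state v = e_1⊗⋯⊗e_1 ∈ W is: L_{11}(z,λ)v = v; L_{ij}(z,λ)v = 0 for all i,j ∈ {2,…,N} with i ≠ j; and L_{ii}(z,λ)v = Φ_i(z,λ)v for i ∈ {2,…,N}, where Φ_i(z,λ) = θ(z)θ(λ_i-λ_1+Nℓγ) / (θ(z-Nℓγ)θ(λ_i-λ_1)). Consequently, for any scalar function g of λ: A(z)[g(λ)v] = g(λ-γω_1)v, D_{ij}(z)[g(λ)v] = 0 for i ≠ j, and D_{ii}(z)[g(λ)v] = Φ_i(z,λ) g(λ-γω_i)v. -/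
/-!
Apply `L(z,λ)` to `e_j ⊗ v` one factor at a time, from the right.  Since
`R (e_1 ⊗ e_1) = e_1 ⊗ e_1`, the vector `e_1 ⊗ v` is fixed by every factor (`Lprod_zero_col`).  For
`j ≠ 1`, the factor on the slots `0, k` sends `e_j ⊗ v` to `α e_j ⊗ v` plus a multiple of a vector
with `e_1` in slot `0` and `e_j` in slot `k`.  The remaining factors act on other slots of `W`
(`Lprod_slot`), where they only meet `e_1`, so this second term never gets an auxiliary index
different from `1` again.  Hence the component of `L (e_j ⊗ v)` with auxiliary index `≠ 1` is
`(∏ α) e_j ⊗ v` (`Lprod_col`).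

The factor in position `k` (counted from `0`) contributes
`α(z - kγ, λ_j - λ_1 + (n-1-k)γ)`, because the `n-1-k` vectors `e_1` to its right shift `λ_1`.
Both quotients of theta functions in this product telescope, which gives `Φ_j` (`prod_alpha`).
The formulas for the difference operators follow since a sum against `v` has a single term.
-/

noncomputable section

open Complex BigOperators

namespace Ruijsenaars

/-- The weight of the basis vector `e_{f 1} ⊗ ⋯ ⊗ e_{f n}` of `W = (ℂ^N)^{⊗n}`:
`wtc f a` is the number of occurrences of the index `a` in `f`. -/
def wtc {n N : ℕ} (f : Fin n → Fin N) (a : Fin N) : ℕ :=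
  (Finset.univ.filter (fun j => f j = a)).card

/-- `R^{(0k)}(z, λ - γ ∑_{j>k} h^{(j)})` acting on `ℂ^N ⊗ W`, `W = (ℂ^N)^{⊗n}`;
it acts as `R(z, λ - γ∑_{j>k} ω_{i_j})` on the factors `0` and `k`. -/
def R0k (τ γ : ℂ) {N n : ℕ} (z : ℂ) (lam : Fin N → ℂ) (k : Fin n) :
    Matrix (Fin N × (Fin n → Fin N)) (Fin N × (Fin n → Fin N)) ℂ := fun p q =>
  if ∀ j, j ≠ k → p.2 j = q.2 j then
    Rm τ γ z
      (fun i => lam i - γ * (((Finset.univ.filter (fun j => k < j ∧ q.2 j = i)).card : ℕ) : ℂ))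
      (p.1, p.2 k) (q.1, q.2 k)
  else 0

/-- `L(z,λ) = R^{(01)}(z, λ-γ∑_{j≥2}h^{(j)}) R^{(02)}(z-γ, ·) ⋯ R^{(0n)}(z-γ(n-1), λ)`
on `ℂ^N ⊗ W`. -/
def Lop (τ γ : ℂ) {N : ℕ} (n : ℕ) (z : ℂ) (lam : Fin N → ℂ) :
    Matrix (Fin N × (Fin n → Fin N)) (Fin N × (Fin n → Fin N)) ℂ :=
  ((List.finRange n).map (fun k => R0k τ γ (z - γ * (k.1 : ℂ)) lam k)).prod

/-- The matrix elements `L_{ij}(z,λ) ∈ End(W)`, defined by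
`L(z,λ)(e_j⊗w) = ∑_i e_i ⊗ L_{ij}(z,λ)w`. -/
def Lent (τ γ : ℂ) {N : ℕ} (n : ℕ) (i j : Fin N) (z : ℂ) (lam : Fin N → ℂ) :
    Matrix (Fin n → Fin N) (Fin n → Fin N) ℂ := fun f g => Lop τ γ n z lam (i, f) (j, g)

/-- The Lax operator entries `ℒ_{ij}(z)` acting on `W`-valued functions of `λ`:
`(ℒ_{ij}(z)ψ)(λ) = L_{ij}(z,λ) ψ(λ-γω_j)`. -/
def Lax (τ γ : ℂ) {N : ℕ} (n : ℕ) (i j : Fin N) (z : ℂ)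
    (ψ : (Fin N → ℂ) → (Fin n → Fin N) → ℂ) : (Fin N → ℂ) → (Fin n → Fin N) → ℂ :=
  fun lam f => ∑ g, Lent τ γ n i j z lam f g * ψ (shift1 γ lam j) g

/-- The transfer matrix `𝒯(z) = ∑_{i=1}^N ℒ_{ii}(z)`. -/
def Transfer (τ γ : ℂ) {N : ℕ} (n : ℕ) (z : ℂ)
    (ψ : (Fin N → ℂ) → (Fin n → Fin N) → ℂ) : (Fin N → ℂ) → (Fin n → Fin N) → ℂ :=
  fun lam f => ∑ i, Lax τ γ n i i z ψ lam f

/-! ### Products of R-matrices on `e_j ⊗ v` -/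

/-- Partial product of the factors of `L`, taken over a list of slots, with arbitrary spectral
parameters `zs k`. -/
def Lprod (τ γ : ℂ) {N n : ℕ} (zs : Fin n → ℂ) (lam : Fin N → ℂ) (l : List (Fin n)) :
    Matrix (Fin N × (Fin n → Fin N)) (Fin N × (Fin n → Fin N)) ℂ :=
  (l.map (fun k => R0k τ γ (zs k) lam k)).prod

lemma Lprod_nil (τ γ : ℂ) {N n : ℕ} (zs : Fin n → ℂ) (lam : Fin N → ℂ) :
    Lprod τ γ zs lam [] = 1 := by
  simp [Lprod]

lemma Lprod_cons (τ γ : ℂ) {N n : ℕ} (zs : Fin n → ℂ) (lam : Fin N → ℂ) (k : Fin n)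
    (l : List (Fin n)) (p r) :
    Lprod τ γ zs lam (k :: l) p r = ∑ q, R0k τ γ (zs k) lam k p q * Lprod τ γ zs lam l q r := by
  simp [Lprod, Matrix.mul_apply]

/-- A product of factors not involving the slot `k` leaves that slot unchanged. -/
lemma Lprod_slot (τ γ : ℂ) {N n : ℕ} (zs : Fin n → ℂ) (lam : Fin N → ℂ) (k : Fin n)
    (l : List (Fin n)) (hk : k ∉ l) (p r : Fin N × (Fin n → Fin N)) (h : p.2 k ≠ r.2 k) :
    Lprod τ γ zs lam l p r = 0 := by
  induction l generalizing p with
  | nil =>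
    rw [Lprod_nil, Matrix.one_apply_ne]
    rintro rfl
    exact h rfl
  | cons m l ih =>
    rw [List.mem_cons, not_or] at hk
    rw [Lprod_cons]
    refine Finset.sum_eq_zero fun q _ => ?_
    by_cases hq : p.2 k = q.2 k
    · rw [ih hk.2 q (hq ▸ h), mul_zero]
    · rw [R0k, if_neg fun H => hq (H k hk.1), zero_mul]

/-- The vector `e_1 ⊗ v` is fixed by each factor. -/
lemma R0k_zero_col (τ γ : ℂ) {M n : ℕ} (z : ℂ) (lam : Fin (M + 2) → ℂ) (k : Fin n)
    (p : Fin (M + 2) × (Fin n → Fin (M + 2))) :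
    R0k τ γ z lam k p (0, fun _ => 0) = if p = (0, fun _ => 0) then 1 else 0 := by
  obtain ⟨a, f⟩ := p
  by_cases h : (a, f) = ((0 : Fin (M + 2)), (fun _ => 0 : Fin n → Fin (M + 2)))
  · rw [if_pos h, h]
    simp [R0k, Rm]
  · rw [if_neg h, R0k]
    split_ifs with H
    · have hne : ¬ (a = 0 ∧ f k = 0) := by
        rintro ⟨rfl, hf⟩
        refine h (Prod.ext rfl (funext fun j => ?_))
        by_cases hj : j = k
        · rw [hj]; exact hf
        · exact H j hj
      simp [Rm, hne]
    · rfl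

lemma Lprod_zero_col (τ γ : ℂ) {M n : ℕ} (zs : Fin n → ℂ) (lam : Fin (M + 2) → ℂ)
    (l : List (Fin n)) (p : Fin (M + 2) × (Fin n → Fin (M + 2))) :
    Lprod τ γ zs lam l p (0, fun _ => 0) = if p = (0, fun _ => 0) then 1 else 0 := by
  induction l generalizing p with
  | nil => rw [Lprod_nil, Matrix.one_apply]
  | cons k l ih =>
    rw [Lprod_cons]
    simp only [ih, mul_ite, mul_one, mul_zero, Finset.sum_ite_eq', Finset.mem_univ, if_true]
    exact R0k_zero_col τ γ (zs k) lam k p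

lemma R0k_col (τ γ : ℂ) {M n : ℕ} (z : ℂ) (lam : Fin (M + 2) → ℂ) (k : Fin n)
    (j : Fin (M + 2)) (hj : j ≠ 0)
    (p : Fin (M + 2) × (Fin n → Fin (M + 2))) (hp : p.1 ≠ 0) :
    R0k τ γ z lam k p (j, fun _ => 0) = if p = (j, fun _ => 0)
      then alpha τ γ z (lam j - lam 0 + γ * ((n - 1 - (k : ℕ) : ℕ) : ℂ)) else 0 := by
  obtain ⟨a, f⟩ := p
  by_cases h : (a, f) = (j, (fun _ => 0 : Fin n → Fin (M + 2)))
  · rw [if_pos h, h]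
    have hc : (Finset.univ.filter (fun m : Fin n => k < m)).card = n - 1 - (k : ℕ) := by
      rw [← Fin.card_Ioi]
      congr 1
      ext m
      simp
    simp only [R0k, Rm, hj, hj.symm, and_true, and_false, implies_true, if_true, if_false, hc,
      Finset.filter_false, Finset.card_empty, Nat.cast_zero, mul_zero, sub_zero]
    congr 1
    ring
  · rw [if_neg h, R0k]
    split_ifs with H
    · have hne : ¬ (a = j ∧ f k = 0) := by
        rintro ⟨rfl, hf⟩
        refine h (Prod.ext rfl (funext fun m => ?_))
        by_cases hm : m = k
        · rw [hm]; exact hf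
        · exact H m hm
      have ha : a ≠ 0 := hp
      simp [Rm, hne, ha]
    · rfl

/-- For `j ≠ 1`, modulo vectors with auxiliary index `1`, the vector `e_j ⊗ v` is an eigenvector
of a product of factors over distinct slots. -/
lemma Lprod_col (τ γ : ℂ) {M n : ℕ} (zs : Fin n → ℂ) (lam : Fin (M + 2) → ℂ)
    (j : Fin (M + 2)) (hj : j ≠ 0) (l : List (Fin n)) (hl : l.Nodup)
    (p : Fin (M + 2) × (Fin n → Fin (M + 2))) (hp : p.1 ≠ 0) :
    Lprod τ γ zs lam l p (j, fun _ => 0) = if p = (j, fun _ => 0)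
      then (l.map fun k =>
        alpha τ γ (zs k) (lam j - lam 0 + γ * ((n - 1 - (k : ℕ) : ℕ) : ℂ))).prod
      else 0 := by
  induction l generalizing p with
  | nil => rw [Lprod_nil, Matrix.one_apply]; simp
  | cons k l ih =>
    rw [List.nodup_cons] at hl
    rw [Lprod_cons, Finset.sum_eq_single (j, fun _ => 0)]
    · rw [R0k_col τ γ (zs k) lam k j hj p hp, ih hl.2 _ hj]
      simp
    · intro q _ hq
      by_cases hq0 : q.1 = 0
      · by_cases hk : q.2 k = 0
        -- The factor fixes `e_1 ⊗ e_1`, so it cannot produce the auxiliary index `p.1 ≠ 0`.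
        · have : R0k τ γ (zs k) lam k p q = 0 := by
            rw [R0k]
            split_ifs
            · simp [Rm, hq0, hk, hp]
            · rfl
          rw [this, zero_mul]
        · rw [Lprod_slot τ γ zs lam k l hl.1 q _ hk, mul_zero]
      · rw [ih hl.2 q hq0, if_neg hq, mul_zero]
    · simp

/-! ### Telescoping of the theta quotients -/

lemma prod_range_div_succ (g : ℕ → ℂ) (n : ℕ) (hg : ∀ k, k < n → g (k + 1) ≠ 0) :
    ∏ k ∈ Finset.range (n + 1), g k / g (k + 1) = g 0 / g (n + 1) := by
  induction n with
  | zero => simp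
  | succ n ih =>
    rw [Finset.prod_range_succ, ih fun k hk => hg k (by omega)]
    exact div_mul_div_cancel₀ (hg n (by omega))

/-- Both theta quotients in the product of the `α` telescope.  Only the intermediate theta values cancel,
so `θ(z)`, `θ(z - nγ)`, `θ(x)` and `θ(x + nγ)` may vanish. -/
lemma prod_alpha (τ γ z x : ℂ) (n : ℕ) (hn : 1 ≤ n)
    (hz : ∀ k : ℕ, 1 ≤ k → k < n → theta τ (z - γ * k) ≠ 0)
    (hx : ∀ k : ℕ, 1 ≤ k → k < n → theta τ (x + γ * k) ≠ 0) :
    ((List.finRange n).map fun k : Fin n =>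
        alpha τ γ (z - γ * ((k : ℕ) : ℂ)) (x + γ * ((n - 1 - (k : ℕ) : ℕ) : ℂ))).prod
      = theta τ z * theta τ (x + n * γ) / (theta τ (z - n * γ) * theta τ x) := by
  obtain ⟨m, rfl⟩ : ∃ m, n = m + 1 := ⟨n - 1, by omega⟩
  rw [← List.ofFn_eq_map, List.prod_ofFn, Fin.prod_univ_eq_prod_range (fun k : ℕ =>
    alpha τ γ (z - γ * (k : ℂ)) (x + γ * ((m + 1 - 1 - k : ℕ) : ℂ)))]
  have h1 := prod_range_div_succ (fun k => theta τ (z - γ * k)) m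
    (fun k hk => hz (k + 1) (by omega) (by omega))
  have h2 := prod_range_div_succ (fun k => theta τ (x + γ * ((m + 1 - k : ℕ) : ℂ))) m
    (fun k hk => hx (m + 1 - (k + 1)) (by omega) (by omega))
  have h3 := congrArg₂ (· * ·) h1 h2
  simp only [← Finset.prod_mul_distrib] at h3
  convert h3 using 1
  · refine Finset.prod_congr rfl fun k hk => ?_
    rw [Finset.mem_range] at hk
    have e : m + 1 - k = (m - k) + 1 := by omega
    have e' : m + 1 - (k + 1) = m - k := by omega
    rw [e, e', Nat.add_sub_cancel, alpha, div_mul_div_comm]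
    push_cast
    congr 3
    all_goals ring_nf
  · rw [div_mul_div_comm]
    simp
    ring_nf

/-! ### The Lax operator on the reference state -/

/-- Applying `ℒ_{ij}(z)` to `g(λ)v` selects the column of `L_{ij}(z,λ)` indexed by `v`. -/
lemma Lax_ref (τ γ : ℂ) {M : ℕ} (n : ℕ) (i j : Fin (M + 2)) (z : ℂ) (lam : Fin (M + 2) → ℂ)
    (gs : (Fin (M + 2) → ℂ) → ℂ) (f : Fin n → Fin (M + 2)) :
    Lax τ γ n i j z (fun l h => gs l * (if h = (fun _ => 0) then 1 else 0)) lam f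
      = Lent τ γ n i j z lam f (fun _ => 0) * gs (shift1 γ lam j) := by
  simp [Lax]

/-- the action of the Lax operator on the reference state
`v = e_1 ⊗ ⋯ ⊗ e_1 ∈ W = (ℂ^N)^{⊗Nℓ}` (`N = M+2`; the index `0 : Fin (M+2)`
plays the role of `1 ∈ {1,…,N}`):
`L_{11}(z,λ)v = v`, `L_{ij}(z,λ)v = 0` for `i ≠ j`, `i,j ≥ 2`,
`L_{ii}(z,λ)v = Φ_i(z,λ)v` for `i ≥ 2`, with
`Φ_i(z,λ) = θ(z)θ(λ_i-λ_1+Nℓγ)/(θ(z-Nℓγ)θ(λ_i-λ_1))`; consequently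
`A(z)[g(λ)v] = g(λ-γω_1)v`, `D_{ij}(z)[g(λ)v] = 0` for `i ≠ j`, and
`D_{ii}(z)[g(λ)v] = Φ_i(z,λ)g(λ-γω_i)v`. -/
theorem statement8 (τ γ : ℂ) (hτ : 0 < τ.im) (M ℓ : ℕ) (hℓ : 1 ≤ ℓ)
    (z : ℂ) (lam : Fin (M + 2) → ℂ)
    (hlam : ∀ c : ℤ, |c| ≤ (M + 2) * ℓ + 2 →
      ∀ a b : Fin (M + 2), a ≠ b → theta τ (lam a - lam b + c * γ) ≠ 0)
    (hz : ∀ c : ℤ, 1 ≤ c → c ≤ (M + 2) * ℓ + 2 → theta τ (z - c * γ) ≠ 0) :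
    (∀ f : Fin ((M + 2) * ℓ) → Fin (M + 2),
      Lent τ γ ((M + 2) * ℓ) 0 0 z lam f (fun _ => 0)
        = if f = (fun _ => 0) then 1 else 0) ∧
    (∀ i j : Fin (M + 2), i ≠ 0 → j ≠ 0 → i ≠ j →
      ∀ f, Lent τ γ ((M + 2) * ℓ) i j z lam f (fun _ => 0) = 0) ∧
    (∀ i : Fin (M + 2), i ≠ 0 → ∀ f,
      Lent τ γ ((M + 2) * ℓ) i i z lam f (fun _ => 0)
        = (theta τ z * theta τ (lam i - lam 0 + (((M + 2) * ℓ : ℕ) : ℂ) * γ) /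
            (theta τ (z - (((M + 2) * ℓ : ℕ) : ℂ) * γ) * theta τ (lam i - lam 0))) *
          (if f = (fun _ => 0) then 1 else 0)) ∧
    (∀ (gs : (Fin (M + 2) → ℂ) → ℂ) (f : Fin ((M + 2) * ℓ) → Fin (M + 2)),
      Lax τ γ ((M + 2) * ℓ) 0 0 z
          (fun l h => gs l * (if h = (fun _ => 0) then 1 else 0)) lam f
        = gs (shift1 γ lam 0) * (if f = (fun _ => 0) then 1 else 0)) ∧
    (∀ i j : Fin (M + 2), i ≠ 0 → j ≠ 0 → i ≠ j →
      ∀ (gs : (Fin (M + 2) → ℂ) → ℂ) (f : Fin ((M + 2) * ℓ) → Fin (M + 2)),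
      Lax τ γ ((M + 2) * ℓ) i j z
          (fun l h => gs l * (if h = (fun _ => 0) then 1 else 0)) lam f = 0) ∧
    (∀ i : Fin (M + 2), i ≠ 0 →
      ∀ (gs : (Fin (M + 2) → ℂ) → ℂ) (f : Fin ((M + 2) * ℓ) → Fin (M + 2)),
      Lax τ γ ((M + 2) * ℓ) i i z
          (fun l h => gs l * (if h = (fun _ => 0) then 1 else 0)) lam f
        = (theta τ z * theta τ (lam i - lam 0 + (((M + 2) * ℓ : ℕ) : ℂ) * γ) /
            (theta τ (z - (((M + 2) * ℓ : ℕ) : ℂ) * γ) * theta τ (lam i - lam 0))) *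
          gs (shift1 γ lam i) * (if f = (fun _ => 0) then 1 else 0)) := by
  have hn : 1 ≤ (M + 2) * ℓ := Nat.mul_pos (by omega) hℓ
  have H1 : ∀ f : Fin ((M + 2) * ℓ) → Fin (M + 2),
      Lent τ γ ((M + 2) * ℓ) 0 0 z lam f (fun _ => 0) = if f = (fun _ => 0) then 1 else 0 := by
    intro f
    refine (Lprod_zero_col τ γ (fun k => z - γ * (k.1 : ℂ)) lam (List.finRange _) (0, f)).trans ?_
    simp
  have H2 : ∀ i j : Fin (M + 2), i ≠ 0 → j ≠ 0 → i ≠ j →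
      ∀ f, Lent τ γ ((M + 2) * ℓ) i j z lam f (fun _ => 0) = 0 := by
    intro i j hi hj hij f
    refine (Lprod_col τ γ (fun k => z - γ * (k.1 : ℂ)) lam j hj (List.finRange _)
      (List.nodup_finRange _) (i, f) hi).trans ?_
    simp [hij]
  have H3 : ∀ i : Fin (M + 2), i ≠ 0 → ∀ f,
      Lent τ γ ((M + 2) * ℓ) i i z lam f (fun _ => 0)
        = (theta τ z * theta τ (lam i - lam 0 + (((M + 2) * ℓ : ℕ) : ℂ) * γ) /
            (theta τ (z - (((M + 2) * ℓ : ℕ) : ℂ) * γ) * theta τ (lam i - lam 0))) *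
          (if f = (fun _ => 0) then 1 else 0) := by
    intro i hi f
    refine (Lprod_col τ γ (fun k => z - γ * (k.1 : ℂ)) lam i hi (List.finRange _)
      (List.nodup_finRange _) (i, f) hi).trans ?_
    rw [prod_alpha τ γ z (lam i - lam 0) _ hn]
    · simp
    · intro k h1 h2
      have h2' : (k : ℤ) < (M + 2) * ℓ := by exact_mod_cast h2
      have := hz k (by omega) (by omega)
      rwa [Int.cast_natCast, mul_comm] at this
    · intro k h1 h2
      have h2' : (k : ℤ) < (M + 2) * ℓ := by exact_mod_cast h2
      have := hlam k (by rw [Nat.abs_cast]; omega) i 0 hi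
      rwa [Int.cast_natCast, mul_comm] at this
  refine ⟨H1, H2, H3, fun gs f => ?_, fun i j hi hj hij gs f => ?_, fun i hi gs f => ?_⟩
  · rw [Lax_ref, H1, mul_comm]
  · rw [Lax_ref, H2 i j hi hj hij, zero_mul]
  · rw [Lax_ref, H3 i hi]
    ring
end Ruijsenaars
end
end
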